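/- (Finite speed of disturbance for the linear Schrödinger equation.) Let d ≥ 1 and let u : ℝ → 𝒮(ℝ^d; ℂ) be a Schwartz solution of the linear Schrödinger equation. Let A, B ⊆ ℝ^d be nonempty sets with dist(A,B) > 0, and assume supp u(0) ⊆ A. Then for every t ≥ 0, ‖u(t)‖_{L²(B)} ≤ (2 ‖∇u(0)‖_{L²(ℝ^d)} / dist(A,B)) · t. -/

import Mathlib

open MeasureTheory Filter
open scoped RealInnerProductSpace

noncomputable section

abbrev Ed (d : ℕ) : Type := EuclideanSpace ℝ (Fin d)

/-- The `i`-th standard basis vector of `ℝ^d`. -/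
def stdBasis {d : ℕ} (i : Fin d) : Ed d := EuclideanSpace.single i 1

/-- The `i`-th spatial partial derivative. -/
def pd {d : ℕ} (f : Ed d → ℂ) (i : Fin d) (x : Ed d) : ℂ :=
  fderiv ℝ f x (stdBasis i)

/-- The spatial Laplacian. -/
def lap {d : ℕ} (f : Ed d → ℂ) (x : Ed d) : ℂ :=
  ∑ i, pd (pd f i) i x

/-- Squared (Euclidean) pointwise norm of the spatial gradient. -/
def gradNormSq {d : ℕ} (f : Ed d → ℂ) (x : Ed d) : ℝ :=
  ∑ i, ‖pd f i x‖ ^ 2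

/-- `L²` norm of `f` restricted to a set `s`. -/
def L2On {d : ℕ} (s : Set (Ed d)) (f : Ed d → ℂ) : ℝ :=
  (∫ x in s, ‖f x‖ ^ 2) ^ (1/2 : ℝ)

/-- `L²` norm of `f` on all of `ℝ^d`. -/
def L2 {d : ℕ} (f : Ed d → ℂ) : ℝ :=
  (∫ x, ‖f x‖ ^ 2) ^ (1/2 : ℝ)

/-- `L²` norm of the spatial gradient of `f`. -/
def gradL2 {d : ℕ} (f : Ed d → ℂ) : ℝ :=
  (∫ x, gradNormSq f x) ^ (1/2 : ℝ)

/-- Distance between two sets. -/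
def setDist {d : ℕ} (A B : Set (Ed d)) : ℝ :=
  sInf (Set.image2 dist A B)

/-- A Schwartz solution of the linear Schrödinger equation:
smooth in time-space and `∂ₜ u = i Δ u`. -/
def IsLinSchrodSol (d : ℕ) (u : ℝ → SchwartzMap (Ed d) ℂ) : Prop :=
  ContDiff ℝ (⊤ : ℕ∞) (fun p : ℝ × Ed d => u p.1 p.2) ∧
  ∀ t x, deriv (fun s => u s x) t = Complex.I * lap (u t) x

/-- A Schwartz solution of the nonlinear Schrödinger equation with parameters `lam, σ`:
smooth in time-space and `∂ₜ u = i (Δ u + lam |u|^σ u)`. -/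
def IsNLSSol (d : ℕ) (lam σ : ℝ) (u : ℝ → SchwartzMap (Ed d) ℂ) : Prop :=
  ContDiff ℝ (⊤ : ℕ∞) (fun p : ℝ × Ed d => u p.1 p.2) ∧
  ∀ t x, deriv (fun s => u s x) t =
    Complex.I * (lap (u t) x + ((lam * ‖u t x‖ ^ σ : ℝ) : ℂ) * u t x)

/-! For a Lipschitz cutoff `χ : E → [0, 1]` vanishing on `A`, Green's formula and Cauchy–Schwarz
bound the derivative of `∫ χ² |u|²` by `4 Lip(χ) ‖χ u‖ ‖∇u‖`, that is `d/dt ‖χ u‖ ≤ 2 Lip(χ) ‖∇u‖`.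
With `χ = min (1, dist(·, A) / D)`, where `D = dist(A, B)`, the claim follows once `‖∇u(t)‖` is
known to be conserved. Conservation holds for the free propagator by Plancherel, so what remains is
`u(t) = exp(i t Δ) u(0)`. As `u` is only jointly smooth in `(t, x)`, its `L²` norms are not known to
be locally bounded in time. They are lower semicontinuous, though, so Baire's theorem gives bounds
near some points of any closed set of times, and this is enough because the graph norm of the
Laplacian is invariant under the propagator. -/

section Baire

open Set Topology

variable {T X : Type*} {v : T → X}

theorem isOpen_setOf_eventually_eq [TopologicalSpace T] (v : T → X) (c : X) :
    IsOpen {t | v t = c ∧ ∀ᶠ s in 𝓝 t, v s = v t} := by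
  refine isOpen_iff_mem_nhds.2 fun t ⟨htc, ht⟩ => ?_
  filter_upwards [eventually_eventually_nhds.2 ht, ht] with s hs hst
  exact ⟨hst.trans htc, by simpa only [hst] using hs⟩

theorem exists_eq_and_not_eventually_eq_of_isPreconnected [TopologicalSpace T]
    (hv : ∀ c, IsClosed {t | v t = c}) {W : Set T} (hW : IsPreconnected W) {k : T} (hkW : k ∈ W)
    (hk : ¬ ∀ᶠ s in 𝓝 k, v s = v k) {s : T} (hs : s ∈ W) :
    ∃ k' ∈ W, v k' = v s ∧ ¬ ∀ᶠ r in 𝓝 k', v r = v k' := by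
  by_contra! hall
  have hcover : W ⊆ {t | v t = v s ∧ ∀ᶠ r in 𝓝 t, v r = v t} ∪ {t | v t = v s}ᶜ := fun t ht => by
    by_cases h : v t = v s
    · exact .inl ⟨h, hall t ht h⟩
    · exact .inr h
  have hks : v k ≠ v s := fun h => hk (hall k hkW h)
  obtain ⟨t, -, ht, ht'⟩ := hW _ _ (isOpen_setOf_eventually_eq v (v s)) (hv (v s)).isOpen_compl
    hcover ⟨s, hs, rfl, hall s hs rfl⟩ ⟨k, hkW, hks⟩
  exact ht' ht.1

/- By Baire, if `v` were not locally constant everywhere, some `F N` would contain a portion of the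
closed set of bad points. Every value of `v` near that portion is taken on it, hence a whole
neighbourhood lies in the invariant set `F N`, where `v` is constant. -/
theorem apply_eq_apply_of_eq_on_preconnected_subset_iUnion [MetricSpace T] [CompleteSpace T]
    [LocallyConnectedSpace T] [PreconnectedSpace T] (hv : ∀ c, IsClosed {t | v t = c})
    {F : ℕ → Set T} (hF : ∀ N, IsClosed (F N)) (hcover : ∀ t, ∃ N, t ∈ F N)
    (hinv : ∀ N s t, v s = v t → s ∈ F N → t ∈ F N)
    (hconst : ∀ N (W : Set T), IsPreconnected W → W ⊆ F N → ∀ s ∈ W, ∀ t ∈ W, v s = v t) (s t : T) :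
    v s = v t := by
  suffices h : ∀ t, ∀ᶠ s in 𝓝 t, v s = v t from
    ((IsLocallyConstant.iff_eventually_eq v).2 h).apply_eq_of_preconnectedSpace s t
  by_contra! hbad
  set K : Set T := {t | ¬ ∀ᶠ s in 𝓝 t, v s = v t}
  have hK : IsClosed K := by
    refine ⟨isOpen_iff_eventually.2 fun t ht => ?_⟩
    have ht : ∀ᶠ s in 𝓝 t, v s = v t := not_not.1 ht
    filter_upwards [(isOpen_setOf_eventually_eq v (v t)).mem_nhds ⟨rfl, ht⟩] with s hs
    exact not_not.2 hs.2
  have : CompleteSpace K := hK.completeSpace_coe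
  have : Nonempty K := let ⟨k, hk⟩ := hbad; ⟨k, not_eventually.2 hk⟩
  obtain ⟨N, ⟨k, hkK⟩, hkN⟩ := nonempty_interior_of_iUnion_of_closed
    (fun N => (hF N).preimage continuous_subtype_val)
    (eq_univ_of_forall fun k : K => mem_iUnion.2 (hcover k))
  obtain ⟨V, hV, hVN⟩ := mem_nhds_subtype K _ _ |>.1 (mem_interior_iff_mem_nhds.1 hkN)
  obtain ⟨W, hWV, hWo, hkW, hWc⟩ :=
    locallyConnectedSpace_iff_subsets_isOpen_isConnected.1 ‹_› k V hV
  have hWN : W ⊆ F N := fun s hs => by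
    obtain ⟨k', hk'W, hk's, hk'⟩ :=
      exists_eq_and_not_eventually_eq_of_isPreconnected hv hWc.isPreconnected hkW hkK hs
    exact hinv N k' s hk's (hVN (show (⟨k', hk'⟩ : K) ∈ Subtype.val ⁻¹' V from hWV hk'W))
  exact hkK (mem_of_superset (hWo.mem_nhds hkW) fun s hs =>
    hconst N W hWc.isPreconnected hWN s hs k hkW)

end Baire

section Propagator

open Complex Laplacian
open scoped SchwartzMap FourierTransform LineDeriv Real

theorem iteratedDeriv_cexp_ofReal_mul_I (n : ℕ) :
    iteratedDeriv n (fun x : ℝ => cexp (x * I)) = fun x : ℝ => I ^ n * cexp (x * I) := by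
  induction n with
  | zero => simp
  | succ n ih =>
    ext x
    have h : HasDerivAt (fun y : ℝ => cexp (y * I)) (cexp (x * I) * I) x := by
      simpa using ((hasDerivAt_id x).ofReal_comp.mul_const I).cexp
    rw [iteratedDeriv_succ, ih, (h.const_mul (I ^ n)).deriv]
    ring

theorem hasTemperateGrowth_cexp_ofReal_mul_I :
    Function.HasTemperateGrowth fun x : ℝ => cexp (x * I) := by
  refine ⟨(ofRealCLM.contDiff.mul contDiff_const).cexp, fun n => ⟨0, 1, fun x => ?_⟩⟩
  simp [norm_iteratedFDeriv_eq_norm_iteratedDeriv, iteratedDeriv_cexp_ofReal_mul_I,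
    norm_exp_ofReal_mul_I]

variable {E H : Type*} [NormedAddCommGroup E]

/-- The Fourier symbol `exp(-i t |2πξ|²)` of the free Schrödinger group `exp(i t Δ)`, in Mathlib's
normalization of the Fourier transform. -/
def schrodingerPhase (t : ℝ) (ξ : E) : ℂ :=
  cexp ((-((2 * π) ^ 2 * t * ‖ξ‖ ^ 2) : ℝ) * I)

theorem norm_schrodingerPhase (t : ℝ) (ξ : E) : ‖schrodingerPhase t ξ‖ = 1 :=
  norm_exp_ofReal_mul_I _

theorem schrodingerPhase_zero (ξ : E) : schrodingerPhase 0 ξ = 1 := by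
  simp [schrodingerPhase]

theorem schrodingerPhase_add (s t : ℝ) (ξ : E) :
    schrodingerPhase (s + t) ξ = schrodingerPhase s ξ * schrodingerPhase t ξ := by
  rw [schrodingerPhase, schrodingerPhase, schrodingerPhase, ← exp_add]
  push_cast
  ring_nf

theorem continuous_schrodingerPhase :
    Continuous fun p : ℝ × E => schrodingerPhase p.1 p.2 := by
  unfold schrodingerPhase
  fun_prop

theorem hasDerivAt_schrodingerPhase (t : ℝ) (ξ : E) :
    HasDerivAt (schrodingerPhase · ξ) (I * -(2 * π * ‖ξ‖) ^ 2 * schrodingerPhase t ξ) t := by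
  have h : HasDerivAt (fun s : ℝ => -((2 * π) ^ 2 * s * ‖ξ‖ ^ 2)) (-((2 * π) ^ 2 * ‖ξ‖ ^ 2)) t := by
    simpa using (((hasDerivAt_id t).const_mul ((2 * π) ^ 2)).mul_const (‖ξ‖ ^ 2)).fun_neg
  refine (h.ofReal_comp.mul_const I).cexp.congr_deriv ?_
  rw [schrodingerPhase]
  push_cast
  ring

variable [InnerProductSpace ℝ E]

@[fun_prop]
theorem hasTemperateGrowth_schrodingerPhase (t : ℝ) :
    Function.HasTemperateGrowth (schrodingerPhase t : E → ℂ) :=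
  hasTemperateGrowth_cexp_ofReal_mul_I.comp
    (f := fun ξ : E => -((2 * π) ^ 2 * t * ‖ξ‖ ^ 2)) (by fun_prop)

variable [FiniteDimensional ℝ E] [MeasurableSpace E] [BorelSpace E]
  [NormedAddCommGroup H] [InnerProductSpace ℂ H]

/-- The free Schrödinger group `exp(i t Δ)` on Schwartz functions, as a Fourier multiplier. -/
def freePropagator (t : ℝ) : 𝓢(E, H) →L[ℂ] 𝓢(E, H) :=
  SchwartzMap.fourierMultiplierCLM H (schrodingerPhase t)

theorem freePropagator_apply_eq_integral (t : ℝ) (f : 𝓢(E, H)) (x : E) :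
    freePropagator t f x =
      ∫ ξ, cexp ((2 * π * ⟪ξ, x⟫ : ℝ) * I) • schrodingerPhase t ξ • 𝓕 f ξ := by
  rw [freePropagator, SchwartzMap.fourierMultiplierCLM_apply, SchwartzMap.fourierInv_coe,
    Real.fourierInv_eq']
  simp only [SchwartzMap.smulLeftCLM_apply_apply (hasTemperateGrowth_schrodingerPhase t)]

theorem continuous_freePropagator (f : 𝓢(E, H)) :
    Continuous fun p : ℝ × E => freePropagator p.1 f p.2 := by
  simp only [freePropagator_apply_eq_integral]
  have hphase := continuous_schrodingerPhase (E := E)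
  have hf := (𝓕 f).continuous
  refine continuous_of_dominated (bound := fun ξ => ‖𝓕 f ξ‖) (fun p => ?_)
    (fun p => .of_forall fun ξ => ?_) (𝓕 f).integrable.norm (.of_forall fun ξ => ?_)
  · have := hphase.comp (Continuous.prodMk_right p.1)
    exact Continuous.aestronglyMeasurable (by fun_prop)
  · rw [norm_smul, norm_smul, norm_schrodingerPhase, norm_exp_ofReal_mul_I, one_mul, one_mul]
  · have := hphase.comp (Continuous.prodMk_left ξ)
    fun_prop

variable [CompleteSpace H]

theorem fourier_laplacian_apply (f : 𝓢(E, H)) (ξ : E) :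
    𝓕 (Δ f) ξ = (-(2 * π * ‖ξ‖) ^ 2 : ℝ) • 𝓕 f ξ := by
  have h : (fun ξ : E => ‖ξ‖ ^ 2).HasTemperateGrowth := by fun_prop
  rw [SchwartzMap.laplacian_eq_fourierMultiplierCLM, SchwartzMap.fourierMultiplierCLM_apply,
    FourierTransform.fourier_smul, FourierTransform.fourier_fourierInv_eq, _root_.smul_apply,
    SchwartzMap.smulLeftCLM_apply_apply h, smul_smul]
  congr 1
  ring

theorem fourier_freePropagator_apply (t : ℝ) (f : 𝓢(E, H)) (ξ : E) :
    𝓕 (freePropagator t f) ξ = schrodingerPhase t ξ • 𝓕 f ξ := by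
  rw [freePropagator, SchwartzMap.fourierMultiplierCLM_apply,
    FourierTransform.fourier_fourierInv_eq,
    SchwartzMap.smulLeftCLM_apply_apply (hasTemperateGrowth_schrodingerPhase t)]

theorem hasDerivAt_freePropagator (t : ℝ) (f : 𝓢(E, H)) (x : E) :
    HasDerivAt (fun s => freePropagator s f x) (I • freePropagator t (Δ f) x) t := by
  simp only [freePropagator_apply_eq_integral]
  have hf := (𝓕 f).continuous
  have hΔ := (𝓕 (Δ f)).continuous
  have hphase := fun s => (hasTemperateGrowth_schrodingerPhase (E := E) s).1.continuous
  rw [← integral_smul]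
  refine (hasDerivAt_integral_of_dominated_loc_of_deriv_le univ_mem
    (bound := fun ξ => ‖𝓕 (Δ f) ξ‖) (F' := fun s ξ =>
      I • cexp ((2 * π * ⟪ξ, x⟫ : ℝ) * I) • schrodingerPhase s ξ • 𝓕 (Δ f) ξ)
    (.of_forall fun s => ?_) ?_ ?_ (.of_forall fun ξ s _ => ?_) (𝓕 (Δ f)).integrable.norm
    (.of_forall fun ξ s _ => ?_)).2
  · have := hphase s
    exact Continuous.aestronglyMeasurable (by fun_prop)
  · have := hphase t
    refine (𝓕 f).integrable.mono (Continuous.aestronglyMeasurable (by fun_prop))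
      (.of_forall fun ξ => ?_)
    rw [norm_smul, norm_smul, norm_schrodingerPhase, norm_exp_ofReal_mul_I, one_mul, one_mul]
  · have := hphase t
    exact Continuous.aestronglyMeasurable (by fun_prop)
  · rw [norm_smul, norm_smul, norm_smul, norm_schrodingerPhase, norm_exp_ofReal_mul_I, norm_I,
      one_mul, one_mul, one_mul]
  · refine (((hasDerivAt_schrodingerPhase s ξ).smul_const (𝓕 f ξ)).const_smul
      (cexp ((2 * π * ⟪ξ, x⟫ : ℝ) * I))).congr_deriv ?_
    rw [fourier_laplacian_apply, ← Complex.coe_smul]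
    simp only [smul_smul]
    push_cast
    ring_nf

theorem freePropagator_zero (f : 𝓢(E, H)) : freePropagator 0 f = f := by
  have h : (schrodingerPhase 0 : E → ℂ) = fun _ => 1 := funext schrodingerPhase_zero
  rw [freePropagator, h, SchwartzMap.fourierMultiplierCLM_const]
  simp

theorem freePropagator_freePropagator (s t : ℝ) (f : 𝓢(E, H)) :
    freePropagator s (freePropagator t f) = freePropagator (s + t) f := by
  have h : (schrodingerPhase (s + t) : E → ℂ) = schrodingerPhase s * schrodingerPhase t :=
    funext (schrodingerPhase_add s t)
  rw [freePropagator, freePropagator, SchwartzMap.fourierMultiplierCLM_fourierMultiplierCLM_apply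
    (by fun_prop) (by fun_prop), ← h, freePropagator]

theorem fourierMultiplierCLM_freePropagator (t : ℝ) {g : E → ℂ} (hg : g.HasTemperateGrowth)
    (f : 𝓢(E, H)) : SchwartzMap.fourierMultiplierCLM H g (freePropagator t f) =
      freePropagator t (SchwartzMap.fourierMultiplierCLM H g f) := by
  have ht := hasTemperateGrowth_schrodingerPhase (E := E) t
  rw [freePropagator, SchwartzMap.fourierMultiplierCLM_fourierMultiplierCLM_apply hg ht,
    SchwartzMap.fourierMultiplierCLM_fourierMultiplierCLM_apply ht hg, mul_comm]

theorem lineDeriv_freePropagator (t : ℝ) (f : 𝓢(E, H)) (m : E) :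
    ∂_{m} (freePropagator t f) = freePropagator t (∂_{m} f) := by
  have hm : (fun ξ : E => ⟪ξ, m⟫).HasTemperateGrowth := by fun_prop
  rw [SchwartzMap.lineDeriv_eq_fourierMultiplierCLM, SchwartzMap.lineDeriv_eq_fourierMultiplierCLM,
    map_smul, ← SchwartzMap.fourierMultiplierCLM_ofReal ℂ hm,
    ← SchwartzMap.fourierMultiplierCLM_ofReal ℂ hm,
    fourierMultiplierCLM_freePropagator t (by fun_prop)]

theorem laplacian_freePropagator (t : ℝ) (f : 𝓢(E, H)) :
    Δ (freePropagator t f) = freePropagator t (Δ f) := by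
  simp only [SchwartzMap.laplacian_eq_sum (stdOrthonormalBasis ℝ E), lineDeriv_freePropagator,
    map_sum]

theorem integral_norm_sq_freePropagator (t : ℝ) (f : 𝓢(E, H)) :
    ∫ x, ‖freePropagator t f x‖ ^ 2 = ∫ x, ‖f x‖ ^ 2 := by
  rw [← SchwartzMap.integral_norm_sq_fourier, ← SchwartzMap.integral_norm_sq_fourier f]
  simp only [fourier_freePropagator_apply, norm_smul, norm_schrodingerPhase, one_mul]

end Propagator

section Conservation

open Complex Laplacian Set
open scoped SchwartzMap LineDeriv

attribute [local instance] InnerProductSpace.complexToReal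

theorem isClosed_setOf_lintegral_le {T X : Type*} [TopologicalSpace T] [SequentialSpace T]
    [MeasurableSpace X] {μ : Measure X} {f : T → X → ENNReal} (hmeas : ∀ t, Measurable (f t))
    (hcont : ∀ x, Continuous (f · x)) (C : ENNReal) : IsClosed {t | ∫⁻ x, f t x ∂μ ≤ C} := by
  refine IsSeqClosed.isClosed fun t t₀ ht hlim => ?_
  calc ∫⁻ x, f t₀ x ∂μ
      = ∫⁻ x, liminf (fun n => f (t n) x) atTop ∂μ :=
        lintegral_congr fun x => (((hcont x).tendsto t₀).comp hlim).liminf_eq.symm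
    _ ≤ liminf (fun n => ∫⁻ x, f (t n) x ∂μ) atTop := lintegral_liminf_le fun n => hmeas (t n)
    _ ≤ C := liminf_le_of_frequently_le' (.of_forall ht)

theorem integral_eq_of_hasDerivAt_of_integral_eq_zero {X : Type*} [TopologicalSpace X]
    [SecondCountableTopology X] [MeasurableSpace X] [OpensMeasurableSpace X]
    {μ : Measure X} [SFinite μ] {G G' : ℝ → X → ℝ} {s t M : ℝ}
    (hG : ∀ r x, HasDerivAt (G · x) (G' r x) r) (hG' : Continuous fun p : ℝ × X => G' p.1 p.2)
    (hint : ∀ r, Integrable (G r) μ) (hint' : ∀ r, Integrable (G' r) μ)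
    (hM : ∀ r ∈ uIcc s t, ∫ x, ‖G' r x‖ ∂μ ≤ M) (h0 : ∀ r ∈ uIcc s t, ∫ x, G' r x ∂μ = 0) :
    ∫ x, G t x ∂μ = ∫ x, G s x ∂μ := by
  have hmeas : AEStronglyMeasurable (fun p : ℝ × X => G' p.1 p.2)
      ((volume.restrict (uIoc s t)).prod μ) := hG'.aestronglyMeasurable
  have hprod : Integrable (fun p : ℝ × X => G' p.1 p.2) ((volume.restrict (uIoc s t)).prod μ) := by
    refine (integrable_prod_iff hmeas).2 ⟨.of_forall hint', ?_⟩
    have : IsFiniteMeasure (volume.restrict (uIoc s t)) :=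
      isFiniteMeasure_restrict.2 measure_Ioc_lt_top.ne
    refine .of_bound hmeas.norm.integral_prod_right' M ?_
    filter_upwards [ae_restrict_mem measurableSet_uIoc] with r hr
    rw [Real.norm_of_nonneg (integral_nonneg fun x => norm_nonneg _)]
    exact hM r (uIoc_subset_uIcc hr)
  have hftc : ∀ x, ∫ r in s..t, G' r x = G t x - G s x := fun x =>
    intervalIntegral.integral_eq_sub_of_hasDerivAt (fun r _ => hG r x)
      (hG'.along_fst.intervalIntegrable s t)
  have hswap : ∫ x, (∫ r in s..t, G' r x) ∂μ = ∫ r in s..t, (∫ x, G' r x ∂μ) := by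
    simp only [intervalIntegral.intervalIntegral_eq_integral_uIoc, integral_smul]
    rw [integral_integral_swap hprod]
  rw [← sub_eq_zero, ← integral_sub (hint t) (hint s)]
  simp only [← hftc]
  rw [hswap, intervalIntegral.integral_congr h0]
  simp

variable {E H : Type*} [NormedAddCommGroup E] [InnerProductSpace ℝ E] [FiniteDimensional ℝ E]
  [NormedAddCommGroup H] [InnerProductSpace ℂ H]

variable (H) in
/-- The real symplectic form `ω(z, w) = ⟪z, I • w⟫_ℝ` underlying a complex inner product space;
`2 ω(u, Δ u)` is the time derivative of `|u|²` along a solution. -/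
def symplecticForm : H →L[ℝ] H →L[ℝ] ℝ :=
  (innerSL ℝ).bilinearComp (ContinuousLinearMap.id ℝ H) (I • ContinuousLinearMap.id ℝ H)

theorem symplecticForm_apply (z w : H) : symplecticForm H z w = ⟪z, I • w⟫ := rfl

theorem symplecticForm_swap (z w : H) : symplecticForm H w z = -symplecticForm H z w := by
  change RCLike.re (inner ℂ w (I • z)) = -RCLike.re (inner ℂ z (I • w))
  simpa [inner_smul_right] using (inner_im_symm (𝕜 := ℂ) z w).symm

theorem symplecticForm_self (z : H) : symplecticForm H z z = 0 := by
  linarith [symplecticForm_swap z z]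

theorem abs_symplecticForm_le (z w : H) : |symplecticForm H z w| ≤ ‖z‖ * ‖w‖ := by
  simpa [symplecticForm_apply, norm_smul] using abs_real_inner_le_norm z (I • w)

/-- A curve of Schwartz functions solving `∂ₜ u = i Δ u` pointwise. Only joint continuity in
`(t, x)` is assumed of `u` and `Δ u`: nothing is required of `u` as a curve in `𝓢(E, H)`. -/
structure IsSchrodingerSolution (u : ℝ → 𝓢(E, H)) : Prop where
  continuous : Continuous fun p : ℝ × E => u p.1 p.2
  continuous_laplacian : Continuous fun p : ℝ × E => Δ (u p.1) p.2
  hasDerivAt : ∀ t x, HasDerivAt (u · x) (I • Δ (u t) x) t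

namespace IsSchrodingerSolution

variable {u v : ℝ → 𝓢(E, H)}

theorem sub (hu : IsSchrodingerSolution u) (hv : IsSchrodingerSolution v) :
    IsSchrodingerSolution (u - v) := by
  have hΔ : ∀ t, Δ ((u - v) t) = Δ (u t) - Δ (v t) := fun t =>
    map_sub (LineDeriv.laplacianCLM ℝ E 𝓢(E, H)) (u t) (v t)
  refine ⟨hu.continuous.sub hv.continuous, ?_, fun t x => ?_⟩
  · simp only [hΔ]
    exact hu.continuous_laplacian.sub hv.continuous_laplacian
  · rw [hΔ, sub_apply, smul_sub]
    exact (hu.hasDerivAt t x).sub (hv.hasDerivAt t x)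

theorem hasDerivAt_norm_sq (hu : IsSchrodingerSolution u) (t : ℝ) (x : E) :
    HasDerivAt (fun r => ‖u r x‖ ^ 2) (2 * symplecticForm H (u t x) (Δ (u t) x)) t :=
  (hu.hasDerivAt t x).norm_sq

theorem continuous_symplecticForm (hu : IsSchrodingerSolution u) :
    Continuous fun p : ℝ × E => symplecticForm H (u p.1 p.2) (Δ (u p.1) p.2) :=
  ((symplecticForm H).continuous.comp hu.continuous).clm_apply hu.continuous_laplacian

end IsSchrodingerSolution

variable [MeasurableSpace E] [BorelSpace E]

theorem integrable_norm_sq_schwartz (f : 𝓢(E, H)) : Integrable (fun x => ‖f x‖ ^ 2) :=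
  (f.memLp 2).integrable_norm_pow two_ne_zero

theorem integral_symplecticForm_laplacian (f : 𝓢(E, H)) :
    ∫ x, symplecticForm H (f x) (Δ f x) = 0 := by
  have h := SchwartzMap.integral_bilinear_laplacian_right_eq_left (μ := volume) f f
    (symplecticForm H)
  simp only [symplecticForm_swap (f _), integral_neg] at h
  linarith

/-- The squared graph norm of the Laplacian in `L²`. It dominates `∫ |∂ₜ |u|²|` along a solution. -/
def graphNormSq (f : 𝓢(E, H)) : ℝ :=
  ∫ x, (‖f x‖ ^ 2 + ‖Δ f x‖ ^ 2)

theorem integrable_graphNormSq (f : 𝓢(E, H)) : Integrable fun x => ‖f x‖ ^ 2 + ‖Δ f x‖ ^ 2 :=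
  (integrable_norm_sq_schwartz f).add (integrable_norm_sq_schwartz (Δ f))

theorem graphNormSq_sub_le (f g : 𝓢(E, H)) :
    graphNormSq (f - g) ≤ 2 * graphNormSq f + 2 * graphNormSq g := by
  rw [graphNormSq, graphNormSq, graphNormSq, ← integral_const_mul, ← integral_const_mul,
    ← integral_add ((integrable_graphNormSq f).const_mul 2)
      ((integrable_graphNormSq g).const_mul 2)]
  refine integral_mono (integrable_graphNormSq _)
    (((integrable_graphNormSq f).const_mul 2).add ((integrable_graphNormSq g).const_mul 2))
    fun x => ?_
  have hsub : ∀ z w : H, ‖z - w‖ ^ 2 ≤ 2 * ‖z‖ ^ 2 + 2 * ‖w‖ ^ 2 := fun z w => by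
    nlinarith [parallelogram_law_with_norm ℝ z w, sq_nonneg ‖z + w‖]
  have hΔ : Δ (f - g) x = Δ f x - Δ g x :=
    DFunLike.congr_fun (map_sub (LineDeriv.laplacianCLM ℝ E 𝓢(E, H)) f g) x
  simp only [hΔ, sub_apply]
  linarith [hsub (f x) (g x), hsub (Δ f x) (Δ g x)]

variable [CompleteSpace H] in
theorem graphNormSq_freePropagator (t : ℝ) (f : 𝓢(E, H)) :
    graphNormSq (freePropagator t f) = graphNormSq f := by
  simp only [graphNormSq]
  rw [integral_add, integral_add, laplacian_freePropagator, integral_norm_sq_freePropagator,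
    integral_norm_sq_freePropagator] <;> exact integrable_norm_sq_schwartz _

variable [CompleteSpace H] in
theorem isSchrodingerSolution_freePropagator (s : ℝ) (f : 𝓢(E, H)) :
    IsSchrodingerSolution fun t => freePropagator (t - s) f where
  continuous := (continuous_freePropagator f).comp (g := fun p : ℝ × E => freePropagator p.1 f p.2)
    (f := fun p : ℝ × E => (p.1 - s, p.2)) (by fun_prop)
  continuous_laplacian := by
    simp only [laplacian_freePropagator]
    exact (continuous_freePropagator (Δ f)).comp (f := fun p : ℝ × E => (p.1 - s, p.2))
      (by fun_prop)
  hasDerivAt t x := by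
    rw [laplacian_freePropagator]
    exact (hasDerivAt_freePropagator (t - s) f x).comp_sub_const t s

namespace IsSchrodingerSolution

variable {u : ℝ → 𝓢(E, H)} {s t N : ℝ}

theorem integral_norm_sq_eq (hu : IsSchrodingerSolution u)
    (hN : ∀ r ∈ uIcc s t, graphNormSq (u r) ≤ N) :
    ∫ x, ‖u t x‖ ^ 2 = ∫ x, ‖u s x‖ ^ 2 := by
  have hint : ∀ r, Integrable fun x => 2 * symplecticForm H (u r x) (Δ (u r) x) := fun r =>
    (SchwartzMap.pairing (symplecticForm H) (u r) (Δ (u r))).integrable.const_mul 2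
  refine integral_eq_of_hasDerivAt_of_integral_eq_zero hu.hasDerivAt_norm_sq
    (hu.continuous_symplecticForm.const_mul 2) (fun r => integrable_norm_sq_schwartz (u r)) hint
    (fun r hr => le_trans ?_ (hN r hr)) fun r _ => ?_
  · refine integral_mono (hint r).norm (integrable_graphNormSq (u r)) fun x => ?_
    have h := abs_symplecticForm_le (u r x) (Δ (u r) x)
    rw [norm_mul, Real.norm_two, Real.norm_eq_abs]
    linarith [two_mul_le_add_sq ‖u r x‖ ‖Δ (u r) x‖]
  · rw [integral_const_mul, integral_symplecticForm_laplacian, mul_zero]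

theorem isClosed_setOf_graphNormSq_le (hu : IsSchrodingerSolution u) (hN : 0 ≤ N) :
    IsClosed {t | graphNormSq (u t) ≤ N} := by
  have hcont : Continuous fun p : ℝ × E => ‖u p.1 p.2‖ ^ 2 + ‖Δ (u p.1) p.2‖ ^ 2 := by
    have := hu.continuous
    have := hu.continuous_laplacian
    fun_prop
  have hcont' : Continuous fun p : ℝ × E =>
    ENNReal.ofReal (‖u p.1 p.2‖ ^ 2 + ‖Δ (u p.1) p.2‖ ^ 2) := ENNReal.continuous_ofReal.comp hcont
  have hiff : ∀ t, graphNormSq (u t) ≤ N ↔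
      ∫⁻ x, ENNReal.ofReal (‖u t x‖ ^ 2 + ‖Δ (u t) x‖ ^ 2) ≤ ENNReal.ofReal N := fun t => by
    rw [← ofReal_integral_eq_lintegral_ofReal (integrable_graphNormSq _)
      (.of_forall fun x => by positivity), ENNReal.ofReal_le_ofReal_iff hN, graphNormSq]
  simp only [hiff]
  exact isClosed_setOf_lintegral_le (fun t => hcont'.along_snd.measurable)
    (fun x => hcont'.along_fst) _

variable [CompleteSpace H]

theorem eq_freePropagator_of_graphNormSq_le (hu : IsSchrodingerSolution u)
    (hN : ∀ r ∈ uIcc s t, graphNormSq (u r) ≤ N) : u t = freePropagator (t - s) (u s) := by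
  set e : ℝ → 𝓢(E, H) := u - fun r => freePropagator (r - s) (u s)
  have he : IsSchrodingerSolution e := hu.sub (isSchrodingerSolution_freePropagator s (u s))
  have hes : e s = 0 := by simp [e, freePropagator_zero]
  have heN : ∀ r ∈ uIcc s t, graphNormSq (e r) ≤ 2 * N + 2 * N := fun r hr => by
    refine (graphNormSq_sub_le _ _).trans ?_
    rw [graphNormSq_freePropagator]
    linarith [hN r hr, hN s left_mem_uIcc]
  have hmass : ∫ x, ‖e t x‖ ^ 2 = 0 := by
    rw [he.integral_norm_sq_eq heN, hes]
    simp
  have hzero : (fun x => ‖e t x‖ ^ 2) = 0 := by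
    refine (Continuous.ae_eq_iff_eq volume (by fun_prop) (by fun_prop)).1 ?_
    exact (integral_eq_zero_iff_of_nonneg (fun x => by positivity)
      (integrable_norm_sq_schwartz _)).1 hmass
  refine sub_eq_zero.1 (SchwartzMap.ext fun x => ?_)
  have hx : ‖e t x‖ ^ 2 = 0 := congr_fun hzero x
  exact norm_eq_zero.1 (pow_eq_zero_iff two_ne_zero |>.1 hx)

theorem isClosed_setOf_freePropagator_neg_eq (hu : IsSchrodingerSolution u) (c : 𝓢(E, H)) :
    IsClosed {t | freePropagator (-t) (u t) = c} := by
  have hset : {t | freePropagator (-t) (u t) = c} = ⋂ x, {t | u t x = freePropagator t c x} := by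
    ext t
    simp only [mem_iInter, mem_ofPred_eq, ← SchwartzMap.ext_iff]
    constructor <;> rintro h
    · rw [← h, freePropagator_freePropagator, add_neg_cancel, freePropagator_zero]
    · rw [h, freePropagator_freePropagator, neg_add_cancel, freePropagator_zero]
  rw [hset]
  exact isClosed_iInter fun x => isClosed_eq hu.continuous.along_fst
    (continuous_freePropagator c).along_fst

/- Uniqueness is not immediate, since no bound on `graphNormSq (u t)` that is locally uniform in `t`
is available; Baire's theorem makes up for it. -/
theorem eq_freePropagator (hu : IsSchrodingerSolution u) (t : ℝ) :
    u t = freePropagator t (u 0) := by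
  have hinv : ∀ t, graphNormSq (u t) = graphNormSq (freePropagator (-t) (u t)) := fun t =>
    (graphNormSq_freePropagator _ _).symm
  have hconst : freePropagator (-t) (u t) = freePropagator (-0) (u 0) := by
    refine apply_eq_apply_of_eq_on_preconnected_subset_iUnion
      (v := fun t => freePropagator (-t) (u t)) hu.isClosed_setOf_freePropagator_neg_eq
      (F := fun N => {t | graphNormSq (u t) ≤ N})
      (fun N => hu.isClosed_setOf_graphNormSq_le N.cast_nonneg)
      (fun t => exists_nat_ge (graphNormSq (u t)))
      (fun N s t hst hs => ?_) (fun N W hW hWN s hs t ht => ?_) t 0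
    · change graphNormSq (u t) ≤ N
      rwa [hinv, ← hst, ← hinv]
    · have hN : ∀ r ∈ uIcc t s, graphNormSq (u r) ≤ N := fun r hr =>
        hWN (hW.ordConnected.uIcc_subset ht hs hr)
      simp only [hu.eq_freePropagator_of_graphNormSq_le hN, freePropagator_freePropagator]
      congr 2
      ring
  rw [neg_zero, freePropagator_zero] at hconst
  rw [← hconst, freePropagator_freePropagator, add_neg_cancel, freePropagator_zero]

theorem integral_norm_sq_lineDeriv_eq (hu : IsSchrodingerSolution u) (t : ℝ) (m : E) :
    ∫ x, ‖∂_{m} (u t) x‖ ^ 2 = ∫ x, ‖∂_{m} (u 0) x‖ ^ 2 := by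
  rw [hu.eq_freePropagator t, lineDeriv_freePropagator, integral_norm_sq_freePropagator]

end IsSchrodingerSolution

end Conservation

section Calculus

open Set
open scoped NNReal Topology

theorem hasDerivAt_integral_of_isCompact {X G : Type*} [TopologicalSpace X] [T2Space X]
    [MeasurableSpace X] [OpensMeasurableSpace X] {μ : Measure X} [IsFiniteMeasureOnCompacts μ]
    [NormedAddCommGroup G] [NormedSpace ℝ G] [SecondCountableTopologyEither X G]
    {F F' : ℝ → X → G} {K : Set X} (hK : IsCompact K) (hF : ∀ s, Continuous (F s))
    (hF' : Continuous fun p : ℝ × X => F' p.1 p.2) (hd : ∀ s x, HasDerivAt (F · x) (F' s x) s)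
    (hFK : ∀ s, ∀ x ∉ K, F s x = 0) (s : ℝ) :
    HasDerivAt (fun r => ∫ x, F r x ∂μ) (∫ x, F' s x ∂μ) s := by
  have hF'K : ∀ s, ∀ x ∉ K, F' s x = 0 := fun s x hx => by
    have h := hd s x
    simp only [hFK _ x hx] at h
    exact h.unique (hasDerivAt_const s 0)
  obtain ⟨C, hC⟩ := ((isCompact_closedBall s 1).prod hK).exists_bound_of_continuousOn
    hF'.continuousOn
  refine (hasDerivAt_integral_of_dominated_loc_of_deriv_le (Metric.closedBall_mem_nhds s one_pos)
    (bound := K.indicator fun _ => C) (.of_forall fun r => (hF r).aestronglyMeasurable)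
    ((hF s).integrable_of_hasCompactSupport (.intro hK (hFK s))) hF'.along_snd.aestronglyMeasurable
    (.of_forall fun x r hr => ?_) ?_ (.of_forall fun x r _ => hd r x)).2
  · by_cases hx : x ∈ K
    · simpa only [indicator_of_mem hx] using hC (r, x) ⟨hr, hx⟩
    · rw [indicator_of_notMem hx, hF'K r x hx, norm_zero]
  · exact (integrable_indicator_iff hK.measurableSet).2 (integrableOn_const hK.measure_lt_top.ne)

theorem integral_mul_le_sqrt_mul_sqrt {X : Type*} [MeasurableSpace X] {μ : Measure X} {f g : X → ℝ}
    (hf : 0 ≤ f) (hg : 0 ≤ g) (hf2 : MemLp f 2 μ) (hg2 : MemLp g 2 μ) :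
    ∫ x, f x * g x ∂μ ≤ √(∫ x, f x ^ 2 ∂μ) * √(∫ x, g x ^ 2 ∂μ) := by
  simpa [Real.sqrt_eq_rpow] using integral_mul_le_Lp_mul_Lq_of_nonneg (p := 2) (q := 2)
    (by norm_num [Real.holderConjugate_iff]) (.of_forall hf) (.of_forall hg) (by simpa) (by simpa)

/- `√q` need not be differentiable where `q` vanishes, hence the regularization `√(q + δ²)`. -/
theorem sqrt_le_mul_of_hasDerivAt_le {q q' : ℝ → ℝ} {c t : ℝ} (hc : 0 ≤ c) (hq : ∀ s, 0 ≤ q s)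
    (h0 : q 0 = 0) (hd : ∀ s, HasDerivAt q (q' s) s) (hle : ∀ s, q' s ≤ 2 * c * √(q s))
    (ht : 0 ≤ t) : √(q t) ≤ c * t := by
  refine le_of_forall_pos_le_add fun δ hδ => ?_
  have hpos : ∀ s, 0 < q s + δ ^ 2 := fun s => add_pos_of_nonneg_of_pos (hq s) (pow_pos hδ 2)
  have hmono : ∀ s, √(q s) ≤ √(q s + δ ^ 2) := fun s =>
    Real.sqrt_le_sqrt (le_add_of_nonneg_right (sq_nonneg δ))
  have hderiv : ∀ s, HasDerivAt (fun s => √(q s + δ ^ 2)) (q' s / (2 * √(q s + δ ^ 2))) s :=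
    fun s => ((hd s).add_const _).sqrt (hpos s).ne'
  have hderiv_le : ∀ s, deriv (fun s => √(q s + δ ^ 2)) s ≤ c := fun s => by
    have hsqrt : 0 < √(q s + δ ^ 2) := Real.sqrt_pos.2 (hpos s)
    rw [(hderiv s).deriv, div_le_iff₀ (by positivity)]
    nlinarith [hle s, mul_le_mul_of_nonneg_left (hmono s) hc]
  have hmvt := image_sub_le_mul_sub_of_deriv_le (fun s => (hderiv s).differentiableAt) hderiv_le ht
  simp only [h0, zero_add, sub_zero, Real.sqrt_sq hδ.le] at hmvt
  linarith [hmono t]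

theorem lipschitzWith_sq {X : Type*} [PseudoMetricSpace X] {w : X → ℝ} {L : ℝ≥0}
    (hw : LipschitzWith L w) (hw1 : ∀ x, |w x| ≤ 1) : LipschitzWith (2 * L) fun x => w x ^ 2 := by
  refine .of_dist_le_mul fun x y => ?_
  calc dist (w x ^ 2) (w y ^ 2)
      = |w x + w y| * dist (w x) (w y) := by
        rw [Real.dist_eq, Real.dist_eq, sq_sub_sq, abs_mul]
    _ ≤ 2 * (L * dist x y) := by
        gcongr
        · linarith [abs_add_le (w x) (w y), hw1 x, hw1 y]
        · exact hw.dist_le_mul x y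
    _ = (2 * L : ℝ≥0) * dist x y := by
        push_cast
        ring

variable {E : Type*} [NormedAddCommGroup E]

/-- The truncation of a function `χ : E → [0, 1]` to the ball of radius `R`, tilted by the cone
`‖x‖ / R` so that it costs only `1 / R` in the Lipschitz constant. -/
def coneTruncation (χ : E → ℝ) (R : ℝ) (x : E) : ℝ :=
  max 0 (χ x - R⁻¹ * ‖x‖)

variable {χ : E → ℝ} {R : ℝ}

theorem coneTruncation_nonneg (χ : E → ℝ) (R : ℝ) (x : E) : 0 ≤ coneTruncation χ R x :=
  le_max_left _ _

theorem coneTruncation_le (hR : 0 ≤ R) {x : E} (hχ : 0 ≤ χ x) : coneTruncation χ R x ≤ χ x :=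
  max_le hχ (sub_le_self _ (by positivity))

theorem lipschitzWith_coneTruncation {L : ℝ≥0} (hχ : LipschitzWith L χ) (R : ℝ) :
    LipschitzWith (L + ‖R⁻¹‖₊) (coneTruncation χ R) := by
  have h : LipschitzWith ‖R⁻¹‖₊ fun x : E => R⁻¹ * ‖x‖ := by
    simpa [Function.comp_def] using (lipschitzWith_smul R⁻¹).comp (lipschitzWith_one_norm (E := E))
  exact (hχ.sub h).const_max 0

theorem hasCompactSupport_coneTruncation [ProperSpace E] (hχ : ∀ x, χ x ≤ 1) (hR : 0 < R) :
    HasCompactSupport (coneTruncation χ R) := by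
  refine .intro (isCompact_closedBall (0 : E) R) fun x hx => max_eq_left (sub_nonpos.2 ?_)
  have hx : R < ‖x‖ := by simpa using hx
  exact (hχ x).trans ((le_inv_mul_iff₀ hR).2 (by linarith))

theorem tendsto_coneTruncation {x : E} (hχ : 0 ≤ χ x) :
    Tendsto (fun R => coneTruncation χ R x) atTop (𝓝 (χ x)) := by
  simpa [coneTruncation, hχ] using (tendsto_const_nhds (x := (0 : ℝ))).max
    (((tendsto_inv_atTop_zero (𝕜 := ℝ)).mul_const ‖x‖).const_sub (χ x))

end Calculus

section Flux

open Laplacian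
open scoped SchwartzMap LineDeriv NNReal

variable {E H ι : Type*} [NormedAddCommGroup E] [InnerProductSpace ℝ E]
  [NormedAddCommGroup H] [InnerProductSpace ℂ H] [Fintype ι]

theorem exists_lipschitzWith_schwartz {F : Type*} [NormedAddCommGroup F] [NormedSpace ℝ F]
    (f : 𝓢(E, F)) : ∃ C, LipschitzWith C f := by
  obtain ⟨C, hC, h⟩ := (SchwartzMap.fderivCLM ℝ E F f).decay 0 0
  have hbound : ∀ x, ‖fderiv ℝ f x‖ ≤ C := fun x => by simpa using h x
  exact ⟨⟨C, hC.le⟩, lipschitzWith_of_nnnorm_fderiv_le f.differentiable hbound⟩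

theorem abs_sum_mul_symplecticForm_le (b : OrthonormalBasis ι ℝ E) (l : StrongDual ℝ E) (z : H)
    (g : ι → H) : |∑ i, l (b i) * symplecticForm H z (g i)| ≤ ‖l‖ * (‖z‖ * √(∑ i, ‖g i‖ ^ 2)) := by
  have hsum : ∑ i, l (b i) * symplecticForm H z (g i) =
      symplecticForm H z (∑ i, l (b i) • g i) := by
    simp
  have hcs : ‖∑ i, l (b i) • g i‖ ≤ ‖l‖ * √(∑ i, ‖g i‖ ^ 2) :=
    calc ‖∑ i, l (b i) • g i‖
        ≤ ∑ i, |l (b i)| * ‖g i‖ := norm_sum_le_of_le _ fun i _ => (norm_smul _ _).le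
      _ ≤ √(∑ i, |l (b i)| ^ 2) * √(∑ i, ‖g i‖ ^ 2) := Real.sum_mul_le_sqrt_mul_sqrt _ _ _
      _ = ‖l‖ * √(∑ i, ‖g i‖ ^ 2) := by
        simp only [sq_abs, ← b.norm_dual, Real.sqrt_sq (norm_nonneg l)]
  rw [hsum, mul_left_comm]
  exact (abs_symplecticForm_le z _).trans (mul_le_mul_of_nonneg_left hcs (norm_nonneg z))

variable [FiniteDimensional ℝ E] [MeasurableSpace E] [BorelSpace E]

/-- The squared `L²` norm of the gradient of `f`, computed in the orthonormal basis `b`. -/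
def dirichletEnergy (b : OrthonormalBasis ι ℝ E) (f : 𝓢(E, H)) : ℝ :=
  ∫ x, ∑ i, ‖∂_{b i} f x‖ ^ 2

theorem integrable_sum_norm_sq_lineDeriv (b : OrthonormalBasis ι ℝ E) (f : 𝓢(E, H)) :
    Integrable fun x => ∑ i, ‖∂_{b i} f x‖ ^ 2 :=
  integrable_finsetSum _ fun i _ => integrable_norm_sq_schwartz (∂_{b i} f)

theorem integrable_lineDeriv_mul {W : E → ℝ} {C : ℝ≥0} (hW : LipschitzWith C W) (v : E) {g : E → ℝ}
    (hg : Integrable g) : Integrable fun x => lineDeriv ℝ W x v * g x :=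
  hg.bdd_mul (measurable_lineDeriv hW.continuous).aestronglyMeasurable
    (.of_forall fun _ => norm_lineDeriv_le_of_lipschitz ℝ hW)

theorem integrable_mul_schwartz {W : E → ℝ} (hWc : Continuous W) (hWs : HasCompactSupport W)
    (g : 𝓢(E, ℝ)) : Integrable fun x => W x * g x :=
  (hWc.mul g.continuous).integrable_of_hasCompactSupport hWs.mul_right

theorem integral_mul_lineDeriv_eq_neg_lineDeriv_mul {W : E → ℝ} {C : ℝ≥0} (hW : LipschitzWith C W)
    (hWs : HasCompactSupport W) (g : 𝓢(E, ℝ)) (v : E) :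
    ∫ x, W x * ∂_{v} g x = -∫ x, lineDeriv ℝ W x v * g x := by
  obtain ⟨K, hK⟩ := exists_lipschitzWith_schwartz g
  have hg : ∀ x, ∂_{v} g x = lineDeriv ℝ g x v := fun x => by
    rw [SchwartzMap.lineDerivOp_apply_eq_fderiv,
      g.differentiable.differentiableAt.lineDeriv_eq_fderiv]
  simpa only [hg, mul_comm (W _), lineDeriv_neg, neg_mul, integral_neg] using
    hK.integral_lineDeriv_mul_eq (μ := volume) hW hWs v

theorem integral_mul_symplecticForm_laplacian (b : OrthonormalBasis ι ℝ E) {W : E → ℝ} {C : ℝ≥0}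
    (hW : LipschitzWith C W) (hWs : HasCompactSupport W) (f : 𝓢(E, H)) :
    ∫ x, W x * symplecticForm H (f x) (Δ f x) =
      -∫ x, ∑ i, lineDeriv ℝ W x (b i) * symplecticForm H (f x) (∂_{b i} f x) := by
  set J : ι → 𝓢(E, ℝ) := fun i => SchwartzMap.pairing (symplecticForm H) f (∂_{b i} f)
  have hJ : ∀ i x, ∂_{b i} (J i) x = symplecticForm H (f x) (∂_{b i} (∂_{b i} f) x) := fun i x => by
    have h := (symplecticForm H).hasFDerivAt_of_bilinear (f.hasFDerivAt x)
      ((∂_{b i} f).hasFDerivAt x)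
    have h : fderiv ℝ (J i) x = _ := h.fderiv
    simp [SchwartzMap.lineDerivOp_apply_eq_fderiv, h, symplecticForm_self]
  have hΔ : ∀ x, symplecticForm H (f x) (Δ f x) = ∑ i, ∂_{b i} (J i) x := fun x => by
    simp only [SchwartzMap.laplacian_eq_sum b, sum_apply, map_sum, hJ]
  simp only [hΔ, Finset.mul_sum]
  change _ = -∫ x, ∑ i, lineDeriv ℝ W x (b i) * J i x
  rw [integral_finsetSum _ fun i _ => integrable_mul_schwartz hW.continuous hWs _,
    integral_finsetSum _ fun i _ => integrable_lineDeriv_mul hW (b i) (J i).integrable,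
    ← Finset.sum_neg_distrib]
  exact Finset.sum_congr rfl fun i _ =>
    integral_mul_lineDeriv_eq_neg_lineDeriv_mul hW hWs (J i) (b i)

theorem ae_abs_sum_lineDeriv_sq_mul_symplecticForm_le (b : OrthonormalBasis ι ℝ E) {w : E → ℝ}
    {L : ℝ≥0} (hw : LipschitzWith L w) (hw0 : 0 ≤ w) (f : 𝓢(E, H)) :
    ∀ᵐ x, |∑ i, lineDeriv ℝ (fun y => w y ^ 2) x (b i) * symplecticForm H (f x) (∂_{b i} f x)| ≤
      2 * L * (w x * ‖f x‖ * √(∑ i, ‖∂_{b i} f x‖ ^ 2)) := by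
  filter_upwards [hw.ae_differentiableAt (μ := volume)] with x hx
  have hlineDeriv : ∀ v, lineDeriv ℝ (fun y => w y ^ 2) x v = 2 * w x * fderiv ℝ w x v :=
    fun v => by simpa using ((hx.hasFDerivAt.pow 2).hasLineDerivAt v).lineDeriv
  have hL : ‖fderiv ℝ w x‖ ≤ L := norm_fderiv_le_of_lipschitz ℝ hw
  have h2w : 0 ≤ 2 * w x := mul_nonneg zero_le_two (hw0 x)
  simp only [hlineDeriv, mul_assoc (2 * w x), ← Finset.mul_sum]
  rw [abs_mul, abs_of_nonneg h2w]
  calc 2 * w x * |∑ i, fderiv ℝ w x (b i) * symplecticForm H (f x) (∂_{b i} f x)|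
      ≤ 2 * w x * (‖fderiv ℝ w x‖ * (‖f x‖ * √(∑ i, ‖∂_{b i} f x‖ ^ 2))) := by
        gcongr
        exact abs_sum_mul_symplecticForm_le b _ _ _
    _ ≤ 2 * w x * (L * (‖f x‖ * √(∑ i, ‖∂_{b i} f x‖ ^ 2))) := by gcongr
    _ = 2 * L * (w x * ‖f x‖ * √(∑ i, ‖∂_{b i} f x‖ ^ 2)) := by ring

theorem abs_integral_sq_mul_symplecticForm_laplacian_le (b : OrthonormalBasis ι ℝ E) {w : E → ℝ}
    {L : ℝ≥0} (hw : LipschitzWith L w) (hws : HasCompactSupport w) (hw0 : 0 ≤ w)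
    (hw1 : w ≤ 1) (f : 𝓢(E, H)) :
    |∫ x, w x ^ 2 * symplecticForm H (f x) (Δ f x)| ≤
      2 * L * (√(∫ x, w x ^ 2 * ‖f x‖ ^ 2) * √(dirichletEnergy b f)) := by
  have hW : LipschitzWith (2 * L) fun x => w x ^ 2 :=
    lipschitzWith_sq hw fun x => abs_le.2 ⟨by linarith [show 0 ≤ w x from hw0 x], hw1 x⟩
  have hWs : HasCompactSupport fun x => w x ^ 2 :=
    hws.comp_left (g := fun y : ℝ => y ^ 2) (zero_pow two_ne_zero)
  have hmass : MemLp (fun x => w x * ‖f x‖) 2 :=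
    (hw.continuous.mul f.continuous.norm).memLp_of_hasCompactSupport hws.mul_right
  have hgrad : MemLp (fun x => √(∑ i, ‖∂_{b i} f x‖ ^ 2)) 2 := by
    refine (memLp_two_iff_integrable_sq (Continuous.aestronglyMeasurable (by fun_prop))).2 ?_
    simpa only [Real.sq_sqrt (Finset.sum_nonneg fun i _ => sq_nonneg ‖∂_{b i} f _‖)] using
      integrable_sum_norm_sq_lineDeriv b f
  have hprod : Integrable fun x => w x * ‖f x‖ * √(∑ i, ‖∂_{b i} f x‖ ^ 2) :=
    hmass.integrable_mul hgrad
  rw [integral_mul_symplecticForm_laplacian b hW hWs, abs_neg]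
  calc |∫ x, ∑ i, lineDeriv ℝ (fun y => w y ^ 2) x (b i) * symplecticForm H (f x) (∂_{b i} f x)|
      ≤ ∫ x, 2 * L * (w x * ‖f x‖ * √(∑ i, ‖∂_{b i} f x‖ ^ 2)) :=
        (Real.norm_eq_abs _).symm.trans_le <| norm_integral_le_of_norm_le (hprod.const_mul _)
          (ae_abs_sum_lineDeriv_sq_mul_symplecticForm_le b hw hw0 f)
    _ ≤ 2 * L * (√(∫ x, (w x * ‖f x‖) ^ 2) * √(∫ x, √(∑ i, ‖∂_{b i} f x‖ ^ 2) ^ 2)) := by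
        rw [integral_const_mul]
        gcongr
        exact integral_mul_le_sqrt_mul_sqrt (fun x => mul_nonneg (hw0 x) (norm_nonneg _))
          (fun x => Real.sqrt_nonneg _) hmass hgrad
    _ = 2 * L * (√(∫ x, w x ^ 2 * ‖f x‖ ^ 2) * √(dirichletEnergy b f)) := by
        simp only [mul_pow, dirichletEnergy,
          Real.sq_sqrt (Finset.sum_nonneg fun i _ => sq_nonneg ‖∂_{b i} f _‖)]

end Flux

section Disturbance

open Laplacian Set
open scoped SchwartzMap NNReal Topology

variable {E H ι : Type*} [NormedAddCommGroup E] [InnerProductSpace ℝ E] [FiniteDimensional ℝ E]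
  [MeasurableSpace E] [BorelSpace E] [NormedAddCommGroup H] [InnerProductSpace ℂ H] [Fintype ι]

theorem integrable_sq_mul_norm_sq_schwartz {χ : E → ℝ} (hχc : Continuous χ)
    (hχ : ∀ x, χ x ∈ Icc 0 1) (f : 𝓢(E, H)) : Integrable fun x => χ x ^ 2 * ‖f x‖ ^ 2 :=
  (integrable_norm_sq_schwartz f).bdd_mul (hχc.pow 2).aestronglyMeasurable (c := 1)
    (.of_forall fun x => by simpa [abs_of_nonneg (hχ x).1] using (hχ x).2)

theorem tendsto_integral_coneTruncation_sq_mul_norm_sq {χ : E → ℝ} {L : ℝ≥0}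
    (hχL : LipschitzWith L χ) (hχ : ∀ x, χ x ∈ Icc 0 1) (f : 𝓢(E, H)) :
    Tendsto (fun R => ∫ x, coneTruncation χ R x ^ 2 * ‖f x‖ ^ 2) atTop
      (𝓝 (∫ x, χ x ^ 2 * ‖f x‖ ^ 2)) := by
  refine tendsto_integral_filter_of_dominated_convergence (fun x => ‖f x‖ ^ 2)
    (.of_forall fun R => ?_) ?_ (integrable_norm_sq_schwartz f)
    (.of_forall fun x => ((tendsto_coneTruncation (hχ x).1).pow 2).mul_const _)
  · have := (lipschitzWith_coneTruncation hχL R).continuous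
    exact Continuous.aestronglyMeasurable (by fun_prop)
  · filter_upwards [eventually_ge_atTop 0] with R hR
    refine .of_forall fun x => ?_
    have hle : coneTruncation χ R x ≤ 1 := (coneTruncation_le hR (hχ x).1).trans (hχ x).2
    rw [norm_mul, norm_pow, norm_pow, norm_norm, Real.norm_of_nonneg (coneTruncation_nonneg χ R x)]
    exact mul_le_of_le_one_left (by positivity) (pow_le_one₀ (coneTruncation_nonneg χ R x) hle)

namespace IsSchrodingerSolution

variable {u : ℝ → 𝓢(E, H)} {t : ℝ}

theorem hasDerivAt_integral_sq_mul_norm_sq (hu : IsSchrodingerSolution u) {w : E → ℝ}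
    (hwc : Continuous w) (hws : HasCompactSupport w) (t : ℝ) :
    HasDerivAt (fun r => ∫ x, w x ^ 2 * ‖u r x‖ ^ 2)
      (2 * ∫ x, w x ^ 2 * symplecticForm H (u t x) (Δ (u t) x)) t := by
  rw [← integral_const_mul]
  simp only [mul_left_comm (2 : ℝ)]
  refine hasDerivAt_integral_of_isCompact (F := fun r x => w x ^ 2 * ‖u r x‖ ^ 2)
    (F' := fun r x => w x ^ 2 * (2 * symplecticForm H (u r x) (Δ (u r) x))) hws.isCompact
    (fun r => by fun_prop) ?_ (fun r x => (hu.hasDerivAt_norm_sq r x).const_mul _)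
    (fun r x hx => by simp [image_eq_zero_of_notMem_tsupport hx]) t
  exact ((hwc.comp continuous_snd).pow 2).mul (hu.continuous_symplecticForm.const_mul 2)

variable [CompleteSpace H]

theorem dirichletEnergy_eq (hu : IsSchrodingerSolution u) (b : OrthonormalBasis ι ℝ E) (t : ℝ) :
    dirichletEnergy b (u t) = dirichletEnergy b (u 0) := by
  simp only [dirichletEnergy]
  rw [integral_finsetSum _ fun i _ => integrable_norm_sq_schwartz _,
    integral_finsetSum _ fun i _ => integrable_norm_sq_schwartz _]
  exact Finset.sum_congr rfl fun i _ => hu.integral_norm_sq_lineDeriv_eq t (b i)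

theorem sqrt_integral_sq_mul_norm_sq_le_of_hasCompactSupport (hu : IsSchrodingerSolution u)
    (b : OrthonormalBasis ι ℝ E) {w : E → ℝ} {L : ℝ≥0} (hwL : LipschitzWith L w)
    (hws : HasCompactSupport w) (hw : ∀ x, w x ∈ Icc 0 1) (hw0 : ∀ x, u 0 x ≠ 0 → w x = 0)
    (ht : 0 ≤ t) :
    √(∫ x, w x ^ 2 * ‖u t x‖ ^ 2) ≤ 2 * L * √(dirichletEnergy b (u 0)) * t := by
  refine sqrt_le_mul_of_hasDerivAt_le (by positivity)
    (fun s => integral_nonneg fun x => by positivity) ?_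
    (hu.hasDerivAt_integral_sq_mul_norm_sq hwL.continuous hws) (fun s => ?_) ht
  · have hzero : ∀ x, w x ^ 2 * ‖u 0 x‖ ^ 2 = 0 := fun x => by
      by_cases hx : u 0 x = 0
      · simp [hx]
      · simp [hw0 x hx]
    simp only [hzero, integral_zero]
  · have hflux := (le_abs_self _).trans (abs_integral_sq_mul_symplecticForm_laplacian_le b hwL hws
      (fun x => (hw x).1) (fun x => (hw x).2) (u s))
    rw [hu.dirichletEnergy_eq b s] at hflux
    linarith

theorem sqrt_integral_sq_mul_norm_sq_le (hu : IsSchrodingerSolution u)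
    (b : OrthonormalBasis ι ℝ E) {χ : E → ℝ} {L : ℝ≥0} (hχL : LipschitzWith L χ)
    (hχ : ∀ x, χ x ∈ Icc 0 1) (hχ0 : ∀ x, u 0 x ≠ 0 → χ x = 0) (ht : 0 ≤ t) :
    √(∫ x, χ x ^ 2 * ‖u t x‖ ^ 2) ≤ 2 * L * √(dirichletEnergy b (u 0)) * t := by
  have hbound : ∀ᶠ R : ℝ in atTop, √(∫ x, coneTruncation χ R x ^ 2 * ‖u t x‖ ^ 2) ≤
      2 * (L + |R⁻¹|) * √(dirichletEnergy b (u 0)) * t := by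
    filter_upwards [eventually_gt_atTop 0] with R hR
    have hle : ∀ x, coneTruncation χ R x ≤ χ x := fun x => coneTruncation_le hR.le (hχ x).1
    exact hu.sqrt_integral_sq_mul_norm_sq_le_of_hasCompactSupport b
      (lipschitzWith_coneTruncation hχL R) (hasCompactSupport_coneTruncation (fun x => (hχ x).2) hR)
      (fun x => ⟨coneTruncation_nonneg χ R x, (hle x).trans (hχ x).2⟩)
      (fun x hx => le_antisymm ((hle x).trans_eq (hχ0 x hx)) (coneTruncation_nonneg χ R x)) ht
  have hlim : Tendsto (fun R : ℝ => 2 * (L + |R⁻¹|) * √(dirichletEnergy b (u 0)) * t) atTop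
      (𝓝 (2 * L * √(dirichletEnergy b (u 0)) * t)) := by
    simpa using ((((tendsto_inv_atTop_zero (𝕜 := ℝ)).abs.const_add (L : ℝ)).const_mul 2).mul_const
      √(dirichletEnergy b (u 0))).mul_const t
  exact le_of_tendsto_of_tendsto (tendsto_integral_coneTruncation_sq_mul_norm_sq hχL hχ (u t)).sqrt
    hlim hbound

end IsSchrodingerSolution

theorem setIntegral_norm_sq_le_integral_sq_mul {χ : E → ℝ} (hχc : Continuous χ)
    (hχ : ∀ x, χ x ∈ Icc 0 1) {B : Set E} (hB : ∀ x ∈ B, χ x = 1) (f : 𝓢(E, H)) :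
    ∫ x in B, ‖f x‖ ^ 2 ≤ ∫ x, χ x ^ 2 * ‖f x‖ ^ 2 := by
  have hS : MeasurableSet {x | χ x = 1} := (isClosed_eq hχc continuous_const).measurableSet
  calc ∫ x in B, ‖f x‖ ^ 2
      ≤ ∫ x in {x | χ x = 1}, ‖f x‖ ^ 2 :=
        setIntegral_mono_set (integrable_norm_sq_schwartz f).integrableOn
          (.of_forall fun x => by positivity) (.of_forall hB)
    _ = ∫ x in {x | χ x = 1}, χ x ^ 2 * ‖f x‖ ^ 2 :=
        setIntegral_congr_fun hS fun x (hx : χ x = 1) => by simp [hx]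
    _ ≤ ∫ x, χ x ^ 2 * ‖f x‖ ^ 2 :=
        setIntegral_le_integral (integrable_sq_mul_norm_sq_schwartz hχc hχ f)
          (.of_forall fun x => by positivity)

theorem lipschitzWith_min_one_inv_mul_infDist {X : Type*} [PseudoMetricSpace X] (D : ℝ)
    (A : Set X) : LipschitzWith ‖D⁻¹‖₊ fun x => min 1 (D⁻¹ * Metric.infDist x A) := by
  have h : LipschitzWith ‖D⁻¹‖₊ fun x => D⁻¹ * Metric.infDist x A := by
    simpa [Function.comp_def] using (lipschitzWith_smul D⁻¹).comp (Metric.lipschitz_infDist_pt A)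
  exact h.const_min 1

variable [CompleteSpace H]

theorem finite_speed_of_disturbance_linear_general {u : ℝ → 𝓢(E, H)} (hu : IsSchrodingerSolution u)
    (b : OrthonormalBasis ι ℝ E) {A B : Set E} {D : ℝ} (hD : 0 < D)
    (hAB : ∀ x ∈ B, D ≤ Metric.infDist x A) (hsupp : Function.support (u 0) ⊆ A) {t : ℝ}
    (ht : 0 ≤ t) :
    √(∫ x in B, ‖u t x‖ ^ 2) ≤ 2 * √(dirichletEnergy b (u 0)) / D * t := by
  set χ : E → ℝ := fun x => min 1 (D⁻¹ * Metric.infDist x A)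
  have hχL : LipschitzWith ‖D⁻¹‖₊ χ := lipschitzWith_min_one_inv_mul_infDist D A
  have hχ : ∀ x, χ x ∈ Icc 0 1 := fun x =>
    ⟨le_min zero_le_one (mul_nonneg (inv_nonneg.2 hD.le) Metric.infDist_nonneg), min_le_left _ _⟩
  have hχA : ∀ x, u 0 x ≠ 0 → χ x = 0 := fun x hx => by
    simp [χ, Metric.infDist_zero_of_mem (hsupp hx)]
  have hχB : ∀ x ∈ B, χ x = 1 := fun x hx =>
    min_eq_left ((le_inv_mul_iff₀ hD).2 (by simpa using hAB x hx))
  calc √(∫ x in B, ‖u t x‖ ^ 2)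
      ≤ √(∫ x, χ x ^ 2 * ‖u t x‖ ^ 2) :=
        Real.sqrt_le_sqrt (setIntegral_norm_sq_le_integral_sq_mul hχL.continuous hχ hχB (u t))
    _ ≤ 2 * ‖D⁻¹‖₊ * √(dirichletEnergy b (u 0)) * t :=
        hu.sqrt_integral_sq_mul_norm_sq_le b hχL hχ hχA ht
    _ = 2 * √(dirichletEnergy b (u 0)) / D * t := by
        rw [coe_nnnorm, Real.norm_of_nonneg (inv_nonneg.2 hD.le)]
        ring

end Disturbance

section Euclidean

open Laplacian
open scoped SchwartzMap LineDeriv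

theorem contDiff_lineDeriv_uncurry {E F : Type*} [NormedAddCommGroup E] [NormedSpace ℝ E]
    [NormedAddCommGroup F] [NormedSpace ℝ F] {u : ℝ → 𝓢(E, F)}
    (hu : ContDiff ℝ (⊤ : ℕ∞) fun p : ℝ × E => u p.1 p.2) (v : E) :
    ContDiff ℝ (⊤ : ℕ∞) fun p : ℝ × E => ∂_{v} (u p.1) p.2 := by
  have h : (fun p : ℝ × E => ∂_{v} (u p.1) p.2) =
      fun p => fderiv ℝ (fun p : ℝ × E => u p.1 p.2) p (0, v) := by
    ext ⟨t, x⟩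
    have hcomp : fderiv ℝ (u t) x = _ :=
      ((hu.differentiable (by simp) (t, x)).hasFDerivAt.comp x
        (hasFDerivAt_prodMk_right t x)).fderiv
    rw [SchwartzMap.lineDerivOp_apply_eq_fderiv, hcomp]
    simp
  rw [h]
  exact (hu.fderiv_right (by simp)).clm_apply contDiff_const

variable {d : ℕ}

theorem pd_eq_lineDeriv (f : 𝓢(Ed d, ℂ)) (i : Fin d) :
    pd f i = ∂_{EuclideanSpace.basisFun (Fin d) ℝ i} f := by
  ext x
  rw [pd, stdBasis, SchwartzMap.lineDerivOp_apply_eq_fderiv, EuclideanSpace.basisFun_apply]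

theorem lap_eq_laplacian (f : 𝓢(Ed d, ℂ)) : lap f = Δ f := by
  ext x
  simp only [lap, pd_eq_lineDeriv, SchwartzMap.laplacian_eq_sum (EuclideanSpace.basisFun (Fin d) ℝ),
    sum_apply]

theorem L2On_eq_sqrt (s : Set (Ed d)) (f : Ed d → ℂ) : L2On s f = √(∫ x in s, ‖f x‖ ^ 2) := by
  rw [L2On, Real.sqrt_eq_rpow]

theorem gradL2_eq_sqrt_dirichletEnergy (f : 𝓢(Ed d, ℂ)) :
    gradL2 f = √(dirichletEnergy (EuclideanSpace.basisFun (Fin d) ℝ) f) := by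
  simp only [gradL2, gradNormSq, pd_eq_lineDeriv, dirichletEnergy, Real.sqrt_eq_rpow]

theorem setDist_le_infDist {A B : Set (Ed d)} (hA : A.Nonempty) {x : Ed d} (hx : x ∈ B) :
    setDist A B ≤ Metric.infDist x A := by
  refine (Metric.le_infDist hA).2 fun y hy => ?_
  rw [dist_comm]
  refine csInf_le ⟨0, ?_⟩ ⟨y, hy, x, hx, rfl⟩
  rintro _ ⟨a, -, b, -, rfl⟩
  exact dist_nonneg

theorem IsLinSchrodSol.isSchrodingerSolution {u : ℝ → 𝓢(Ed d, ℂ)} (hu : IsLinSchrodSol d u) :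
    IsSchrodingerSolution u where
  continuous := hu.1.continuous
  continuous_laplacian := by
    simp only [SchwartzMap.laplacian_eq_sum (EuclideanSpace.basisFun (Fin d) ℝ), sum_apply]
    exact continuous_finsetSum _ fun i _ =>
      (contDiff_lineDeriv_uncurry
        (u := fun t => ∂_{EuclideanSpace.basisFun (Fin d) ℝ i} (u t))
        (contDiff_lineDeriv_uncurry hu.1 _) _).continuous
  hasDerivAt t x := by
    have hdiff : Differentiable ℝ fun s => u s x :=
      (hu.1.comp (contDiff_prodMk_left x)).differentiable (by simp)
    rw [smul_eq_mul, ← lap_eq_laplacian, ← hu.2]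
    exact (hdiff t).hasDerivAt

end Euclidean

/-- Finite speed of disturbance for the linear Schrödinger equation:
if `supp u(0) ⊆ A` and `dist(A,B) > 0`, then
`‖u(t)‖_{L²(B)} ≤ (2 ‖∇u(0)‖₂ / dist(A,B)) t` for all `t ≥ 0`. -/
theorem finite_speed_of_disturbance_linear
    {d : ℕ} (hd : 1 ≤ d) (u : ℝ → SchwartzMap (Ed d) ℂ)
    (hu : IsLinSchrodSol d u)
    (A B : Set (Ed d)) (hA : A.Nonempty) (hB : B.Nonempty)
    (hAB : 0 < setDist A B)
    (hsupp : Function.support (⇑(u 0)) ⊆ A)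
    (t : ℝ) (ht : 0 ≤ t) :
    L2On B (fun x => u t x) ≤
      2 * gradL2 (fun x => u 0 x) / setDist A B * t := by
  rw [L2On_eq_sqrt, gradL2_eq_sqrt_dirichletEnergy]
  exact finite_speed_of_disturbance_linear_general hu.isSchrodingerSolution _ hAB
    (fun x hx => setDist_le_infDist hA hx) hsupp ht
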